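/- Cross-term bound (bound on 2·E[p₁ᵗ p₂ᵗ] in the proof of Theorem 1). For every step size η > 0 and every current weight v : Fin d → ℝ, writing u := Q_w(R.mulVec v) − w⋆: 2 · N^{−2} · ∑_{i} ∑_{j} (q i ⬝ᵥ u) · (q i ⬝ᵥ (Q_w(R.mulVec (v⁺(j))) − Q_w(R.mulVec v))) ≤ −ηλ · ‖u‖_G² + (2/(ηλ)) · ( (1/N) · ∑_{j} ‖e(R.mulVec (v⁺(j)))‖_G² + ‖e(R.mulVec v)‖_G² ). -/

import Mathlib

/-!
Write `u = Q_w(Rv) - w⋆`. Orthogonality of `R` and interpolation turn the increment of the quantized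
weight into `e(Rv⁺(j)) - e(Rv) - η (q j ⬝ᵥ u) q j` (`quantized_increment`). The last part, averaged
against `u`, contributes `-2η ‖G u‖² ≤ -2ηλ ‖u‖_G²`, since `G² ⪰ λ G` (`avg_kernel_ge`). The
quantization errors are absorbed by Young's inequality with weight `ηλ` (`young_diff`), applied to
each pair of samples, which costs `ηλ ‖u‖_G²` and leaves the stated bound.
-/

open Matrix Finset

noncomputable section

/-- The (empirical) Gram matrix of the quantized-rotated features. -/
def gram (d N : ℕ) (q : Fin N → Fin d → ℝ) : Matrix (Fin d) (Fin d) ℝ :=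
  (N : ℝ)⁻¹ • ∑ i, Matrix.vecMulVec (q i) (q i)

/-- `K`-weighted squared (semi-)norm `‖v‖_K² = v ⬝ᵥ K v`. -/
def wnormSq {d : ℕ} (K : Matrix (Fin d) (Fin d) ℝ) (v : Fin d → ℝ) : ℝ :=
  v ⬝ᵥ K.mulVec v

/-- Quantization error `e(v) = Q_w(v) - v`. -/
def qerr {d : ℕ} (Qw : (Fin d → ℝ) → Fin d → ℝ) (v : Fin d → ℝ) : Fin d → ℝ :=
  Qw v - v

/-- The rotated STE update at sample `j`. -/
def steUpdate {d N : ℕ} (q : Fin N → Fin d → ℝ) (y : Fin N → ℝ)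
    (Qw : (Fin d → ℝ) → Fin d → ℝ) (R : Matrix (Fin d) (Fin d) ℝ) (η : ℝ)
    (v : Fin d → ℝ) (j : Fin N) : Fin d → ℝ :=
  v - (η * ((q j ⬝ᵥ Qw (R.mulVec v)) - y j)) • Rᵀ.mulVec (q j)

lemma gram_mulVec {d N : ℕ} (q : Fin N → Fin d → ℝ) (x : Fin d → ℝ) :
    (gram d N q).mulVec x = (N : ℝ)⁻¹ • ∑ j, (q j ⬝ᵥ x) • q j := by
  rw [_root_.gram, Matrix.smul_mulVec, Matrix.sum_mulVec]
  congr 1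
  refine Finset.sum_congr rfl fun j _ => ?_
  rw [Matrix.vecMulVec_mulVec]
  ext k
  simp [mul_comm]

lemma dotProduct_gram_mulVec {d N : ℕ} (q : Fin N → Fin d → ℝ) (x z : Fin d → ℝ) :
    x ⬝ᵥ (gram d N q).mulVec z = (N : ℝ)⁻¹ * ∑ i, (q i ⬝ᵥ x) * (q i ⬝ᵥ z) := by
  rw [gram_mulVec, dotProduct_smul, dotProduct_sum, smul_eq_mul]
  congr 1
  refine Finset.sum_congr rfl fun j _ => ?_
  rw [dotProduct_smul, smul_eq_mul, dotProduct_comm x]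
  ring

lemma wnormSq_gram {d N : ℕ} (q : Fin N → Fin d → ℝ) (x : Fin d → ℝ) :
    wnormSq (gram d N q) x = (N : ℝ)⁻¹ * ∑ i, (q i ⬝ᵥ x) ^ 2 := by
  rw [wnormSq, dotProduct_gram_mulVec]
  simp only [sq]

/-- The double sum on the right is `u ⬝ᵥ G² u`, so this is the quadratic form of `G² ⪰ λ G`. -/
lemma avg_kernel_ge {d N : ℕ} (q : Fin N → Fin d → ℝ) (lam : ℝ)
    (hG2 : (gram d N q * gram d N q - lam • gram d N q).PosSemidef) (u : Fin d → ℝ) :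
    lam * wnormSq (gram d N q) u
      ≤ ((N : ℝ) ^ 2)⁻¹ * ∑ i, ∑ j, (q i ⬝ᵥ u) * ((q j ⬝ᵥ u) * (q i ⬝ᵥ q j)) := by
  have h := hG2.dotProduct_mulVec_nonneg u
  rw [star_trivial, Matrix.sub_mulVec, dotProduct_sub, Matrix.smul_mulVec, dotProduct_smul,
    ← Matrix.mulVec_mulVec, dotProduct_gram_mulVec, smul_eq_mul] at h
  have e : ∀ i, q i ⬝ᵥ (gram d N q).mulVec u
      = (N : ℝ)⁻¹ * ∑ j, (q j ⬝ᵥ u) * (q i ⬝ᵥ q j) := by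
    intro i
    rw [gram_mulVec, dotProduct_smul, dotProduct_sum, smul_eq_mul]
    simp only [dotProduct_smul, smul_eq_mul]
  have e2 : (N : ℝ)⁻¹ * ∑ i, (q i ⬝ᵥ u) * (q i ⬝ᵥ (gram d N q).mulVec u)
      = ((N : ℝ) ^ 2)⁻¹ * ∑ i, ∑ j, (q i ⬝ᵥ u) * ((q j ⬝ᵥ u) * (q i ⬝ᵥ q j)) := by
    simp only [e, Finset.mul_sum]
    refine Finset.sum_congr rfl fun i _ => Finset.sum_congr rfl fun j _ => ?_
    rw [sq, mul_inv]
    ring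
  rw [e2] at h
  exact sub_nonneg.mp h

lemma young_diff {s : ℝ} (hs : 0 < s) (a b c : ℝ) :
    2 * (a * (b - c)) ≤ s * a ^ 2 + 2 / s * (b ^ 2 + c ^ 2) := by
  have h : s * a ^ 2 + 2 / s * (b ^ 2 + c ^ 2) - 2 * (a * (b - c))
      = ((s * a - (b - c)) ^ 2 + (b + c) ^ 2) / s := by
    field_simp
    ring
  have : 0 ≤ ((s * a - (b - c)) ^ 2 + (b + c) ^ 2) / s := by positivity
  linarith

lemma quantized_increment {d N : ℕ} (q : Fin N → Fin d → ℝ) (y : Fin N → ℝ)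
    (wstar : Fin d → ℝ) (hinterp : ∀ i, y i = q i ⬝ᵥ wstar)
    (Qw : (Fin d → ℝ) → Fin d → ℝ) (R : Matrix (Fin d) (Fin d) ℝ) (hR1 : R * Rᵀ = 1)
    (η : ℝ) (v : Fin d → ℝ) (j : Fin N) :
    Qw (R.mulVec (steUpdate q y Qw R η v j)) - Qw (R.mulVec v)
      = qerr Qw (R.mulVec (steUpdate q y Qw R η v j)) - qerr Qw (R.mulVec v)
        - (η * (q j ⬝ᵥ (Qw (R.mulVec v) - wstar))) • q j := by
  have h : R.mulVec (steUpdate q y Qw R η v j)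
      = R.mulVec v - (η * (q j ⬝ᵥ (Qw (R.mulVec v) - wstar))) • q j := by
    rw [steUpdate, Matrix.mulVec_sub, Matrix.mulVec_smul, Matrix.mulVec_mulVec, hR1,
      Matrix.one_mulVec, hinterp, dotProduct_sub]
  have h' : (η * (q j ⬝ᵥ (Qw (R.mulVec v) - wstar))) • q j
      = R.mulVec v - R.mulVec (steUpdate q y Qw R η v j) := by
    rw [h]
    abel
  rw [h', qerr, qerr]
  abel

/-- Cross-term bound (bound on `2·E[p₁ᵗ p₂ᵗ]` in the proof of Theorem 1). -/
theorem roste_cross_term_bound (d N : ℕ) (hd : 1 ≤ d) (hN : 1 ≤ N)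
    (q : Fin N → Fin d → ℝ) (y : Fin N → ℝ)
    (wstar : Fin d → ℝ) (hinterp : ∀ i, y i = q i ⬝ᵥ wstar)
    (Qw : (Fin d → ℝ) → Fin d → ℝ)
    (R : Matrix (Fin d) (Fin d) ℝ) (hR1 : R * Rᵀ = 1) (hR2 : Rᵀ * R = 1)
    (lam ρ : ℝ) (hlam : 0 < lam) (hρ : 0 < ρ)
    (hG2 : (gram d N q * gram d N q - lam • gram d N q).PosSemidef)
    (hqG : ∀ i, q i ⬝ᵥ (gram d N q).mulVec (q i) ≤ ρ)
    (η : ℝ) (hη0 : 0 < η)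
    (v : Fin d → ℝ) :
    2 * ((N : ℝ) ^ 2)⁻¹ *
        ∑ i, ∑ j,
          (q i ⬝ᵥ (Qw (R.mulVec v) - wstar)) *
            (q i ⬝ᵥ (Qw (R.mulVec (steUpdate q y Qw R η v j)) - Qw (R.mulVec v)))
      ≤ -(η * lam) * wnormSq (gram d N q) (Qw (R.mulVec v) - wstar)
        + (2 / (η * lam)) *
            ((1 / (N : ℝ)) *
                ∑ j, wnormSq (gram d N q) (qerr Qw (R.mulVec (steUpdate q y Qw R η v j)))
              + wnormSq (gram d N q) (qerr Qw (R.mulVec v))) := by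
  have hN0 : (N : ℝ) ≠ 0 := by
    have : N ≠ 0 := by omega
    exact_mod_cast this
  have hs : 0 < η * lam := mul_pos hη0 hlam
  have hK := avg_kernel_ge q lam hG2 (Qw (R.mulVec v) - wstar)
  simp only [quantized_increment q y wstar hinterp Qw R hR1 η v]
  simp only [wnormSq_gram] at hK ⊢
  -- From here on `u`, `e₀` and the `e₁ j` may be arbitrary vectors.
  generalize Qw (R.mulVec v) - wstar = u at hK ⊢
  generalize qerr Qw (R.mulVec v) = e₀
  generalize he : (fun j => qerr Qw (R.mulVec (steUpdate q y Qw R η v j))) = e₁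
  simp only [fun j => congrFun he j]
  have key : ∀ i j, (q i ⬝ᵥ u) * (q i ⬝ᵥ (e₁ j - e₀ - (η * (q j ⬝ᵥ u)) • q j))
      ≤ (η * lam) / 2 * (q i ⬝ᵥ u) ^ 2
        + 1 / (η * lam) * ((q i ⬝ᵥ e₁ j) ^ 2 + (q i ⬝ᵥ e₀) ^ 2)
        - η * ((q i ⬝ᵥ u) * ((q j ⬝ᵥ u) * (q i ⬝ᵥ q j))) := by
    intro i j
    have h := young_diff hs (q i ⬝ᵥ u) (q i ⬝ᵥ e₁ j) (q i ⬝ᵥ e₀)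
    rw [show 2 / (η * lam) = 2 * (1 / (η * lam)) by ring] at h
    rw [dotProduct_sub, dotProduct_sub, dotProduct_smul, smul_eq_mul]
    linarith
  have hsum := Finset.sum_le_sum fun i (_ : i ∈ Finset.univ) =>
    Finset.sum_le_sum fun j (_ : j ∈ Finset.univ) => key i j
  simp only [Finset.sum_add_distrib, Finset.sum_sub_distrib, ← Finset.mul_sum, Finset.sum_const,
    Finset.card_univ, Fintype.card_fin, nsmul_eq_mul] at hsum
  simp only [← Finset.mul_sum] at hK ⊢
  rw [Finset.sum_comm (f := fun i j => (q i ⬝ᵥ e₁ j) ^ 2)] at hsum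
  have hc : (0 : ℝ) ≤ 2 * ((N : ℝ) ^ 2)⁻¹ := by positivity
  refine (mul_le_mul_of_nonneg_left hsum hc).trans ?_
  have hK' := mul_le_mul_of_nonneg_left hK (by positivity : 0 ≤ 2 * η)
  generalize ∑ i, (q i ⬝ᵥ u) * ∑ j, (q j ⬝ᵥ u) * (q i ⬝ᵥ q j) = S at hK' ⊢
  generalize ∑ i, (q i ⬝ᵥ u) ^ 2 = A at hK' ⊢
  generalize ∑ j, ∑ i, (q i ⬝ᵥ e₁ j) ^ 2 = B
  generalize ∑ i, (q i ⬝ᵥ e₀) ^ 2 = C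
  calc _ = η * lam * ((N : ℝ)⁻¹ * A)
          + 2 / (η * lam) * (1 / (N : ℝ) * ((N : ℝ)⁻¹ * B) + (N : ℝ)⁻¹ * C)
          - 2 * η * (((N : ℝ) ^ 2)⁻¹ * S) := by
        field_simp
    _ ≤ _ := by linarith
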